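/- arXiv:2508.11972 — 2 statements merged into one kernel-verified Lean document; each statement's English description precedes it below -/
import Mathlib

section
/- Let h : A → A' be a homomorphism of conditional Heyting algebras (a Heyting algebra homomorphism with h(a ⊳ b) = h(a) ⊳' h(b) for all a, b). Let a ∈ A, let x' be a prime filter of A', and let z be a prime filter of A such that {b ∈ A | a ⊳ b ∈ h⁻¹(x')} ⊆ z. Then there exists a prime filter z' of A' such that {b' ∈ A' | h(a) ⊳' b' ∈ x'} ⊆ z' and h⁻¹(z') ⊆ z. -/
/-! ## The conditional language `L_⊳` -/

/-- Formulas of the conditional language `L_⊳`, with proposition letters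
indexed by the countable set `ℕ`. -/
inductive CForm : Type where
  | var : ℕ → CForm
  | bot : CForm
  | and : CForm → CForm → CForm
  | or : CForm → CForm → CForm
  | imp : CForm → CForm → CForm
  | cond : CForm → CForm → CForm

/-- `⊤ := ⊥ → ⊥`. -/
def cTop : CForm := CForm.imp CForm.bot CForm.bot

/-- `φ ↔ ψ := (φ → ψ) ∧ (ψ → φ)`. -/
def cIff (φ ψ : CForm) : CForm := CForm.and (CForm.imp φ ψ) (CForm.imp ψ φ)

/-- Uniform substitution of formulas for proposition letters. -/
def psubst (σ : ℕ → CForm) : CForm → CForm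
  | CForm.var q => σ q
  | CForm.bot => CForm.bot
  | CForm.and φ ψ => CForm.and (psubst σ φ) (psubst σ ψ)
  | CForm.or φ ψ => CForm.or (psubst σ φ) (psubst σ ψ)
  | CForm.imp φ ψ => CForm.imp (psubst σ φ) (psubst σ ψ)
  | CForm.cond φ ψ => CForm.cond (psubst σ φ) (psubst σ ψ)

/-- The logic `ICK ⊕ Γ`: the smallest set of `L_⊳`-formulas containing an
axiomatisation of intuitionistic propositional logic, the formulas of `Γ`, the
axioms `(k_c)` and `(n_c)`, closed under uniform substitution, modus ponens and
the two congruence rules. -/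
inductive ICK (Γ : Set CForm) : CForm → Prop where
  | prem {φ : CForm} : φ ∈ Γ → ICK Γ φ
  | a1 : ICK Γ (CForm.imp (CForm.and (CForm.var 0) (CForm.var 1)) (CForm.var 0))
  | a2 : ICK Γ (CForm.imp (CForm.and (CForm.var 0) (CForm.var 1)) (CForm.var 1))
  | a3 : ICK Γ (CForm.imp (CForm.imp (CForm.var 0) (CForm.var 1))
      (CForm.imp (CForm.imp (CForm.var 0) (CForm.var 2))
        (CForm.imp (CForm.var 0) (CForm.and (CForm.var 1) (CForm.var 2)))))
  | a4 : ICK Γ (CForm.imp (CForm.var 0) (CForm.or (CForm.var 0) (CForm.var 1)))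
  | a5 : ICK Γ (CForm.imp (CForm.var 1) (CForm.or (CForm.var 0) (CForm.var 1)))
  | a6 : ICK Γ (CForm.imp (CForm.imp (CForm.var 0) (CForm.var 2))
      (CForm.imp (CForm.imp (CForm.var 1) (CForm.var 2))
        (CForm.imp (CForm.or (CForm.var 0) (CForm.var 1)) (CForm.var 2))))
  | a7 : ICK Γ (CForm.imp CForm.bot (CForm.var 0))
  | a8 : ICK Γ (CForm.imp (CForm.var 0) (CForm.imp (CForm.var 1) (CForm.var 0)))
  | a9 : ICK Γ (CForm.imp
      (CForm.imp (CForm.var 0) (CForm.imp (CForm.var 1) (CForm.var 2)))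
      (CForm.imp (CForm.imp (CForm.var 0) (CForm.var 1))
        (CForm.imp (CForm.var 0) (CForm.var 2))))
  | kc : ICK Γ (cIff (CForm.cond (CForm.var 0) (CForm.and (CForm.var 1) (CForm.var 2)))
      (CForm.and (CForm.cond (CForm.var 0) (CForm.var 1))
        (CForm.cond (CForm.var 0) (CForm.var 2))))
  | nc : ICK Γ (cIff (CForm.cond (CForm.var 0) cTop) cTop)
  | subst {φ : CForm} (σ : ℕ → CForm) : ICK Γ φ → ICK Γ (psubst σ φ)
  | mp {φ ψ : CForm} : ICK Γ (CForm.imp φ ψ) → ICK Γ φ → ICK Γ ψ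
  | congL {φ ψ χ : CForm} :
      ICK Γ (cIff φ ψ) → ICK Γ (cIff (CForm.cond φ χ) (CForm.cond ψ χ))
  | congR {φ ψ χ : CForm} :
      ICK Γ (cIff φ ψ) → ICK Γ (cIff (CForm.cond χ φ) (CForm.cond χ ψ))

/-! ## Conditional Kripke frames and semantics -/

/-- `a` is an upset (upward closed set) w.r.t. the relation `le`. -/
def IsUpset {X : Type} (le : X → X → Prop) (a : Set X) : Prop :=
  ∀ ⦃x y : X⦄, le x y → x ∈ a → y ∈ a

/-- The upward closure `↑s` of a set `s` w.r.t. the relation `le`. -/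
def upCl {X : Type} (le : X → X → Prop) (s : Set X) : Set X :=
  {z | ∃ y ∈ s, le y z}

/-- Truth sets of `L_⊳`-formulas, by intuitionistic Kripke semantics for the
propositional connectives, where `x ⊨ φ ⊳ ψ` iff every `y` with
`x R_{V(φ)} y` satisfies `ψ` (here `V(φ)` is the truth set of `φ`). -/
def csat {X : Type} (le : X → X → Prop) (R : Set X → X → X → Prop)
    (V : ℕ → Set X) : CForm → Set X
  | CForm.var p => V p
  | CForm.bot => ∅
  | CForm.and φ ψ => csat le R V φ ∩ csat le R V ψ
  | CForm.or φ ψ => csat le R V φ ∪ csat le R V ψ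
  | CForm.imp φ ψ => {x | ∀ y, le x y → y ∈ csat le R V φ → y ∈ csat le R V ψ}
  | CForm.cond φ ψ => {x | ∀ y, R (csat le R V φ) x y → y ∈ csat le R V ψ}

/-- A conditional Kripke frame: a nonempty preordered set `(X, le)` with a
family of relations `R a` (indexed by the upsets `a`) satisfying the coherence
condition `(≤ ∘ R_a) ⊆ (R_a ∘ ≤)`. -/
structure CondFrame where
  X : Type
  ne : Nonempty X
  le : X → X → Prop
  le_refl : ∀ x, le x x
  le_trans : ∀ ⦃x y z⦄, le x y → le y z → le x z
  R : Set X → X → X → Prop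
  coh : ∀ a : Set X, IsUpset le a →
    ∀ ⦃x y z⦄, le x y → R a y z → ∃ w, R a x w ∧ le w z

/-- Validity on a conditional Kripke frame: truth at every world under every
valuation of the proposition letters by upsets. -/
def CondFrame.valid (F : CondFrame) (φ : CForm) : Prop :=
  ∀ V : ℕ → Set F.X, (∀ p, IsUpset F.le (V p)) → ∀ x, x ∈ csat F.le F.R V φ

/-! ## Conditional Heyting algebras -/

/-- A conditional Heyting algebra: a Heyting algebra with a binary operation
`cond` (written `⊳` in the paper) preserving finite meets in its second
argument. -/
class CondHeyting (A : Type) extends HeytingAlgebra A where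
  cond : A → A → A
  cond_inf : ∀ a b c : A, cond a (b ⊓ c) = cond a b ⊓ cond a c
  cond_top : ∀ a : A, cond a ⊤ = ⊤

/-- Evaluation of an `L_⊳`-formula in a conditional Heyting algebra under an
assignment `σ` of the proposition letters. -/
def evalCHA {A : Type} [CondHeyting A] (σ : ℕ → A) : CForm → A
  | CForm.var p => σ p
  | CForm.bot => ⊥
  | CForm.and φ ψ => evalCHA σ φ ⊓ evalCHA σ ψ
  | CForm.or φ ψ => evalCHA σ φ ⊔ evalCHA σ ψ
  | CForm.imp φ ψ => evalCHA σ φ ⇨ evalCHA σ ψ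
  | CForm.cond φ ψ => CondHeyting.cond (evalCHA σ φ) (evalCHA σ ψ)

/-- A formula is satisfied in a conditional Heyting algebra if it evaluates to
`⊤` under every assignment. -/
def chaSat (A : Type) [CondHeyting A] (φ : CForm) : Prop :=
  ∀ σ : ℕ → A, evalCHA σ φ = ⊤

/-- A prime filter: a proper, nonempty, upward closed subset, closed under
binary meets, such that `a ⊔ b ∈ x` implies `a ∈ x` or `b ∈ x`. -/
def IsPrimeFilter {A : Type} [Lattice A] (x : Set A) : Prop :=
  x.Nonempty ∧ x ≠ Set.univ ∧
  (∀ ⦃a b : A⦄, a ∈ x → a ≤ b → b ∈ x) ∧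
  (∀ ⦃a b : A⦄, a ∈ x → b ∈ x → a ⊓ b ∈ x) ∧
  (∀ ⦃a b : A⦄, a ⊔ b ∈ x → a ∈ x ∨ b ∈ x)

/-! ## General conditional frames -/

/-- A general conditional frame `(X, ≤, 𝓡, A)`. -/
structure GenFrame where
  X : Type
  le : X → X → Prop
  le_refl : ∀ x, le x x
  le_trans : ∀ ⦃x y z⦄, le x y → le y z → le x z
  le_antisymm : ∀ ⦃x y⦄, le x y → le y x → x = y
  A : Set (Set X)
  upA : ∀ a ∈ A, IsUpset le a
  univ_mem : Set.univ ∈ A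
  empty_mem : ∅ ∈ A
  inter_mem : ∀ a ∈ A, ∀ b ∈ A, a ∩ b ∈ A
  union_mem : ∀ a ∈ A, ∀ b ∈ A, a ∪ b ∈ A
  R : Set X → X → X → Prop
  himp_mem : ∀ a ∈ A, ∀ b ∈ A, {x | ∀ y, le x y → y ∈ a → y ∈ b} ∈ A
  cimp_mem : ∀ a ∈ A, ∀ b ∈ A, {x | ∀ y, R a x y → y ∈ b} ∈ A
  coh : ∀ a ∈ A, ∀ ⦃x y z⦄, le x y → R a y z → ∃ w, R a x w ∧ le w z

/-- The carrier of the complex algebra of a general frame: the admissible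
upsets. -/
def GenFrame.AUp (G : GenFrame) : Type := {a : Set G.X // a ∈ G.A}

instance GenFrame.instLatticeAUp (G : GenFrame) : Lattice G.AUp where
  le a b := a.val ⊆ b.val
  le_refl a := subset_rfl
  le_trans a b c h h' := Set.Subset.trans h h'
  le_antisymm a b h h' := Subtype.ext (subset_antisymm h h')
  sup a b := ⟨a.val ∪ b.val, G.union_mem _ a.2 _ b.2⟩
  le_sup_left a b := Set.subset_union_left
  le_sup_right a b := Set.subset_union_right
  sup_le a b c h h' := Set.union_subset h h'
  inf a b := ⟨a.val ∩ b.val, G.inter_mem _ a.2 _ b.2⟩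
  inf_le_left a b := Set.inter_subset_left
  inf_le_right a b := Set.inter_subset_right
  le_inf a b c h h' := Set.subset_inter h h'

instance GenFrame.instHeytingAUp (G : GenFrame) : HeytingAlgebra G.AUp :=
  { GenFrame.instLatticeAUp G with
    top := ⟨Set.univ, G.univ_mem⟩
    le_top := fun a => Set.subset_univ _
    bot := ⟨∅, G.empty_mem⟩
    bot_le := fun a => Set.empty_subset _
    himp := fun a b => ⟨{x | ∀ y, G.le x y → y ∈ a.val → y ∈ b.val},
      G.himp_mem _ a.2 _ b.2⟩
    compl := fun a => ⟨{x | ∀ y, G.le x y → y ∈ a.val → y ∈ (∅ : Set G.X)},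
      G.himp_mem _ a.2 _ G.empty_mem⟩
    le_himp_iff := by
      intro a b c
      show a.val ⊆ {x | ∀ y, G.le x y → y ∈ b.val → y ∈ c.val} ↔
        a.val ∩ b.val ⊆ c.val
      constructor
      · rintro h x ⟨hxa, hxb⟩
        exact h hxa x (G.le_refl x) hxb
      · intro h x hxa y hle hyb
        exact h ⟨G.upA a.val a.2 hle hxa, hyb⟩
    himp_bot := fun a => rfl }

/-- The complex algebra `AUp(G)` of a general frame `G` is a conditional
Heyting algebra, with `a ⊳ b := {x | R_a[x] ⊆ b}`. -/
instance GenFrame.instCondHeytingAUp (G : GenFrame) : CondHeyting G.AUp where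
  cond a b := ⟨{x | ∀ y, G.R a.val x y → y ∈ b.val}, G.cimp_mem _ a.2 _ b.2⟩
  cond_inf a b c := Subtype.ext (Set.ext fun x => by
    show (∀ y, G.R a.val x y → y ∈ b.val ∩ c.val) ↔
      (∀ y, G.R a.val x y → y ∈ b.val) ∧ (∀ y, G.R a.val x y → y ∈ c.val)
    constructor
    · intro h
      exact ⟨fun y hy => (h y hy).1, fun y hy => (h y hy).2⟩
    · rintro ⟨h1, h2⟩ y hy
      exact ⟨h1 y hy, h2 y hy⟩)
  cond_top a := Subtype.ext (Set.ext fun x => by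
    show (∀ y, G.R a.val x y → y ∈ (Set.univ : Set G.X)) ↔
      x ∈ (Set.univ : Set G.X)
    exact ⟨fun _ => trivial, fun _ y _ => trivial⟩)

/-! ## Conditional Esakia spaces -/

/-- A conditional Esakia space: an Esakia space `(X, le, top)` together with a
family of relations `R a` indexed by the clopen upsets `a`, such that
`{x | R_a[x] ⊆ b}` is clopen for clopen upsets `a, b`, each `R_a[x]` is
closed, and `(≤ ∘ R_a ∘ ≤) = R_a`. -/
structure CondEsakia where
  X : Type
  ne : Nonempty X
  le : X → X → Prop
  le_refl : ∀ x, le x x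
  le_trans : ∀ ⦃x y z⦄, le x y → le y z → le x z
  le_antisymm : ∀ ⦃x y⦄, le x y → le y x → x = y
  top : TopologicalSpace X
  compact : @CompactSpace X top
  sep : ∀ x y : X, ¬ le x y →
    ∃ a : Set X, @IsClopen X top a ∧ IsUpset le a ∧ x ∈ a ∧ y ∉ a
  down_clopen : ∀ a : Set X, @IsClopen X top a →
    @IsClopen X top {x | ∃ y ∈ a, le x y}
  R : Set X → X → X → Prop
  box_clopen : ∀ a b : Set X, @IsClopen X top a → IsUpset le a →
    @IsClopen X top b → IsUpset le b →
    @IsClopen X top {x | ∀ y, R a x y → y ∈ b}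
  coh : ∀ a : Set X, @IsClopen X top a → IsUpset le a →
    ∀ x z : X, (∃ x' y', le x x' ∧ R a x' y' ∧ le y' z) ↔ R a x z
  im_closed : ∀ a : Set X, @IsClopen X top a → IsUpset le a →
    ∀ x : X, @IsClosed X top {y | R a x y}

/-- `a` is a clopen upset of the conditional Esakia space `S`. -/
def CondEsakia.ClopUp (S : CondEsakia) (a : Set S.X) : Prop :=
  @IsClopen S.X S.top a ∧ IsUpset S.le a

/-- Validity on a conditional Esakia space: truth at every world under every
valuation of the proposition letters by clopen upsets. -/
def CondEsakia.valid (S : CondEsakia) (φ : CForm) : Prop :=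
  ∀ V : ℕ → Set S.X, (∀ p, S.ClopUp (V p)) → ∀ x, x ∈ csat S.le S.R V φ

/-- The family of relations of the empty fill-in `κ_∅(S)`: it agrees with
`S.R` on clopen upsets and is empty on all other sets. -/
def CondEsakia.emptyFill (S : CondEsakia) : Set S.X → S.X → S.X → Prop :=
  fun a x y => S.ClopUp a ∧ S.R a x y

/-- Validity on the empty fill-in `κ_∅(S)`, a conditional Kripke frame:
truth at every world under every valuation by (arbitrary) upsets. -/
def CondEsakia.emptyFillValid (S : CondEsakia) (φ : CForm) : Prop :=
  ∀ V : ℕ → Set S.X, (∀ p, IsUpset S.le (V p)) →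
    ∀ x, x ∈ csat S.le S.emptyFill V φ

/-! ## The modal language `L_□` -/

/-- Formulas of the modal language `L_□`. -/
inductive MForm : Type where
  | var : ℕ → MForm
  | bot : MForm
  | and : MForm → MForm → MForm
  | or : MForm → MForm → MForm
  | imp : MForm → MForm → MForm
  | box : MForm → MForm

/-- The translation `(−)^p : L_□ → L_⊳`: it fixes proposition letters, `⊥`,
`∧`, `∨`, `→`, and sends `□ψ` to `p ⊳ ψ^p`. -/
def MForm.transl (p : ℕ) : MForm → CForm
  | MForm.var q => CForm.var q
  | MForm.bot => CForm.bot
  | MForm.and φ ψ => CForm.and (φ.transl p) (ψ.transl p)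
  | MForm.or φ ψ => CForm.or (φ.transl p) (ψ.transl p)
  | MForm.imp φ ψ => CForm.imp (φ.transl p) (ψ.transl p)
  | MForm.box φ => CForm.cond (CForm.var p) (φ.transl p)

/-- The proposition letter `p` occurs (as a subformula) in a modal formula. -/
def MForm.occurs (p : ℕ) : MForm → Prop
  | MForm.var q => p = q
  | MForm.bot => False
  | MForm.and φ ψ => φ.occurs p ∨ ψ.occurs p
  | MForm.or φ ψ => φ.occurs p ∨ ψ.occurs p
  | MForm.imp φ ψ => φ.occurs p ∨ ψ.occurs p
  | MForm.box φ => φ.occurs p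

/-- Truth sets of `L_□`-formulas in a modal model, by intuitionistic Kripke
semantics with `x ⊨ □φ` iff every `y` with `x R y` satisfies `φ`. -/
def msat {X : Type} (le : X → X → Prop) (R : X → X → Prop)
    (V : ℕ → Set X) : MForm → Set X
  | MForm.var p => V p
  | MForm.bot => ∅
  | MForm.and φ ψ => msat le R V φ ∩ msat le R V ψ
  | MForm.or φ ψ => msat le R V φ ∪ msat le R V ψ
  | MForm.imp φ ψ => {x | ∀ y, le x y → y ∈ msat le R V φ → y ∈ msat le R V ψ}
  | MForm.box φ => {x | ∀ y, R x y → y ∈ msat le R V φ}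

/-- A modal Esakia space: an Esakia space with a relation `R` such that each
`R[x]` is closed and `R = (≤ ∘ R ∘ ≤)`. -/
structure ModalEsakia where
  X : Type
  ne : Nonempty X
  le : X → X → Prop
  le_refl : ∀ x, le x x
  le_trans : ∀ ⦃x y z⦄, le x y → le y z → le x z
  le_antisymm : ∀ ⦃x y⦄, le x y → le y x → x = y
  top : TopologicalSpace X
  compact : @CompactSpace X top
  sep : ∀ x y : X, ¬ le x y →
    ∃ a : Set X, @IsClopen X top a ∧ IsUpset le a ∧ x ∈ a ∧ y ∉ a
  down_clopen : ∀ a : Set X, @IsClopen X top a →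
    @IsClopen X top {x | ∃ y ∈ a, le x y}
  R : X → X → Prop
  im_closed : ∀ x : X, @IsClosed X top {y | R x y}
  coh : ∀ x z : X, (∃ x' y', le x x' ∧ R x' y' ∧ le y' z) ↔ R x z

/-- Validity on a modal Esakia space: truth everywhere under every valuation
by clopen upsets. -/
def ModalEsakia.valid (M : ModalEsakia) (φ : MForm) : Prop :=
  ∀ V : ℕ → Set M.X, (∀ p, @IsClopen M.X M.top (V p) ∧ IsUpset M.le (V p)) →
    ∀ x, x ∈ msat M.le M.R V φ

/-- Validity on the underlying modal frame `κ(M)` of a modal Esakia space: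
truth everywhere under every valuation by arbitrary upsets. -/
def ModalEsakia.frameValid (M : ModalEsakia) (φ : MForm) : Prop :=
  ∀ V : ℕ → Set M.X, (∀ p, IsUpset M.le (V p)) → ∀ x, x ∈ msat M.le M.R V φ

/-- An `L_□`-formula is d-persistent if its validity on a modal Esakia space
implies its validity on the underlying modal frame. -/
def DPersistent (φ : MForm) : Prop :=
  ∀ M : ModalEsakia, M.valid φ → M.frameValid φ

/-!
In the notation of `cond_bounded_morphism_lifting`, the elements `b'` with `h a ⊳ b' ∈ x'` form a
filter because `h a ⊳ ·` preserves finite meets, and the elements lying below some `h b` with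
`b ∉ z` form an ideal because the complement of a prime filter is an ideal and `h` is monotone. The
hypothesis on `z` says exactly that this filter and this ideal are disjoint, so the prime filter
theorem separates them.
-/

open Order Set

section

variable {α β : Type*}

theorem disjoint_image_compl_right_iff {f : α → β} {s : Set α} {t : Set β} :
    Disjoint t (f '' sᶜ) ↔ f ⁻¹' t ⊆ s := by
  rw [← subset_compl_iff_disjoint_left, image_subset_iff, preimage_compl, compl_subset_compl]

theorem isUpperSet_of_isPFilter [Preorder α] {F : Set α} (hF : IsPFilter F) : IsUpperSet F :=
  isLowerSet_preimage_ofDual_iff.mp hF.IsLowerSet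

theorem isIdeal_lowerClosure [Preorder α] {s : Set α} (hne : s.Nonempty)
    (hdir : DirectedOn (· ≤ ·) s) : IsIdeal (lowerClosure s : Set α) where
  IsLowerSet := (lowerClosure s).lower
  Nonempty := hne.mono subset_lowerClosure
  Directed := by
    rintro a ⟨c, hc, hac⟩ b ⟨d, hd, hbd⟩
    obtain ⟨e, he, hce, hde⟩ := hdir c hc d hd
    exact ⟨e, subset_lowerClosure he, hac.trans hce, hbd.trans hde⟩

theorem isPFilter_preimage [SemilatticeInf α] [OrderTop α] [SemilatticeInf β] [OrderTop β]
    (g : InfTopHom α β) {F : Set β} (hF : IsPFilter F) : IsPFilter (g ⁻¹' F) := by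
  refine .of_def ⟨⊤, ?_⟩ (fun b hb c hc => ⟨b ⊓ c, ?_, inf_le_left, inf_le_right⟩)
    (fun hbc hb => isUpperSet_of_isPFilter hF (OrderHomClass.mono g hbc) hb)
  · rw [mem_preimage, map_top]
    exact hF.toPFilter.top_mem
  · rw [mem_preimage, map_inf]
    exact PFilter.inf_mem (F := hF.toPFilter) hb hc

theorem exists_prime_filter_of_disjoint [DistribLattice α] {F I : Set α} (hF : IsPFilter F)
    (hI : IsIdeal I) (hFI : Disjoint F I) :
    ∃ G : Set α, IsPFilter G ∧ IsIdeal Gᶜ ∧ F ⊆ G ∧ Disjoint G I := by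
  obtain ⟨J, hJ, hIJ, hFJ⟩ := DistribLattice.prime_ideal_of_disjoint_filter_ideal
    (F := hF.toPFilter) (I := hI.toIdeal) hFI
  refine ⟨(J : Set α)ᶜ, hJ.compl_filter, ?_, subset_compl_iff_disjoint_right.mpr hFJ,
    disjoint_compl_left_iff.mpr hIJ⟩
  rw [compl_compl]
  exact J.isIdeal

theorem exists_prime_filter_preimage_subset [Preorder α] [DistribLattice β] {f : α → β}
    (hf : Monotone f) {F : Set β} (hF : IsPFilter F) {z : Set α} (hz : IsIdeal zᶜ)
    (hFz : f ⁻¹' F ⊆ z) :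
    ∃ G : Set β, IsPFilter G ∧ IsIdeal Gᶜ ∧ F ⊆ G ∧ f ⁻¹' G ⊆ z := by
  have hI : IsIdeal (lowerClosure (f '' zᶜ) : Set β) :=
    isIdeal_lowerClosure (hz.Nonempty.image f) (hz.Directed.mono_comp hf)
  have disjoint_iff {G : Set β} (hG : IsPFilter G) :
      Disjoint G (lowerClosure (f '' zᶜ)) ↔ f ⁻¹' G ⊆ z :=
    (isUpperSet_of_isPFilter hG).disjoint_lowerClosure_right.trans disjoint_image_compl_right_iff
  obtain ⟨G, hG, hGc, hFG, hGI⟩ := exists_prime_filter_of_disjoint hF hI ((disjoint_iff hF).mpr hFz)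
  exact ⟨G, hG, hGc, hFG, (disjoint_iff hG).mp hGI⟩

/-- `box` and `box'` play the roles of `a ⊳ ·` and `h a ⊳ ·`; primality of a filter is encoded, as in
`Order.PFilter.IsPrime`, by its complement being an ideal. -/
theorem cond_bounded_morphism_lifting_general [Preorder α] [DistribLattice β] [OrderTop β]
    {h : α → β} (hh : Monotone h) (box : α → α) (box' : InfTopHom β β)
    (hbox : ∀ b, box' (h b) ≤ h (box b)) {x' : Set β} (hx' : IsPFilter x')
    {z : Set α} (hz : IsIdeal zᶜ) (hsub : {b | box b ∈ h ⁻¹' x'} ⊆ z) :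
    ∃ z' : Set β, IsPFilter z' ∧ IsIdeal z'ᶜ ∧ {b' | box' b' ∈ x'} ⊆ z' ∧ h ⁻¹' z' ⊆ z :=
  exists_prime_filter_preimage_subset hh (isPFilter_preimage box' hx') hz
    fun b hb => hsub (isUpperSet_of_isPFilter hx' (hbox b) hb)

end

theorem isPrimeFilter_iff {A : Type} [Lattice A] {x : Set A} :
    IsPrimeFilter x ↔ IsPFilter x ∧ IsIdeal xᶜ := by
  constructor
  · rintro ⟨hne, hproper, hup, hinf, hprime⟩
    refine ⟨.of_def hne ?_ fun hab ha => hup ha hab,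
      fun a b hba ha hb => ha (hup hb hba), nonempty_compl.mpr hproper, ?_⟩
    · exact fun a ha b hb => ⟨a ⊓ b, hinf ha hb, inf_le_left, inf_le_right⟩
    · exact fun a ha b hb =>
        ⟨a ⊔ b, fun hab => (hprime hab).elim ha hb, le_sup_left, le_sup_right⟩
  · rintro ⟨hF, hI⟩
    refine ⟨hF.toPFilter.nonempty, nonempty_compl.mp hI.Nonempty,
      fun a b ha hab => isUpperSet_of_isPFilter hF hab ha,
      fun a b ha hb => PFilter.inf_mem (F := hF.toPFilter) ha hb, fun a b hab => ?_⟩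
    by_contra! hnot
    exact Ideal.sup_mem (s := hI.toIdeal) hnot.1 hnot.2 hab

/-- The operation `a ⊳ ·` as a finite-meet-preserving map, so that Mathlib's lemmas on such maps
apply to it. -/
def CondHeyting.condHom {A : Type} [CondHeyting A] (a : A) : InfTopHom A A where
  toFun := CondHeyting.cond a
  map_inf' := CondHeyting.cond_inf a
  map_top' := CondHeyting.cond_top a

/-- Let `h : A → A'` be a homomorphism of conditional Heyting
algebras, `a ∈ A`, `x'` a prime filter of `A'` and `z` a prime filter of `A`
with `{b | a ⊳ b ∈ h⁻¹(x')} ⊆ z`.  Then there is a prime filter `z'` of `A'`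
such that `{b' | h(a) ⊳' b' ∈ x'} ⊆ z'` and `h⁻¹(z') ⊆ z`. -/
theorem cond_bounded_morphism_lifting {A A' : Type}
    [CondHeyting A] [CondHeyting A'] (h : HeytingHom A A')
    (hcond : ∀ a b : A,
      h (CondHeyting.cond a b) = CondHeyting.cond (h a) (h b))
    (a : A) (x' : Set A') (hx' : IsPrimeFilter x')
    (z : Set A) (hz : IsPrimeFilter z)
    (hsub : {b : A | CondHeyting.cond a b ∈ (⇑h) ⁻¹' x'} ⊆ z) :
    ∃ z' : Set A', IsPrimeFilter z' ∧
      {b' : A' | CondHeyting.cond (h a) b' ∈ x'} ⊆ z' ∧ (⇑h) ⁻¹' z' ⊆ z := by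
  rw [isPrimeFilter_iff] at hx' hz
  simp only [isPrimeFilter_iff, and_assoc]
  exact cond_bounded_morphism_lifting_general (OrderHomClass.mono h) (CondHeyting.cond a)
    (CondHeyting.condHom (h a)) (fun b => (hcond a b).ge) hx'.1 hz.2 hsub
end

section
/- For every set Γ of L_⊳-formulas and every L_⊳-formula φ: φ ∈ ICK⊕Γ if and only if φ is valid on every conditional Esakia space that validates all formulas of Γ. -/
/-! A conditional Esakia space validates the same formulas as its algebra of clopen upsets.
Conversely, a nontrivial conditional Heyting algebra `A` is represented, through
`a ↦ {x | a ∈ x}`, as the algebra of all clopen upsets of its space of prime filters, ordered by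
inclusion, with `x R_a y` iff `b ∈ y` whenever `a ⊳ b ∈ x`. Hence conditional Esakia spaces and
conditional Heyting algebras determine the same logics, and completeness for the algebras is
witnessed by the Lindenbaum algebra of `ICK ⊕ Γ`. -/

open Order Set

/-! ## Soundness for conditional Heyting algebras -/

section AlgebraicSemantics

variable {A : Type} [CondHeyting A] {Γ : Set CForm} {φ : CForm}

theorem evalCHA_psubst (σ : ℕ → A) (τ : ℕ → CForm) (φ : CForm) :
    evalCHA σ (psubst τ φ) = evalCHA (fun p => evalCHA σ (τ p)) φ := by
  induction φ <;> simp_all only [psubst, evalCHA]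

theorem evalCHA_cIff_eq_top {σ : ℕ → A} {φ ψ : CForm} :
    evalCHA σ (cIff φ ψ) = ⊤ ↔ evalCHA σ φ = evalCHA σ ψ := by
  simp only [cIff, evalCHA, inf_eq_top_iff, himp_eq_top_iff]
  exact le_antisymm_iff.symm

theorem evalCHA_cTop (σ : ℕ → A) : evalCHA σ cTop = ⊤ :=
  himp_self

theorem chaSat_of_subsingleton [Subsingleton A] (φ : CForm) : chaSat A φ :=
  fun _ => Subsingleton.elim _ _

theorem ICK.chaSat (h : ICK Γ φ) (hΓ : ∀ γ ∈ Γ, chaSat A γ) : chaSat A φ := by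
  induction h with
  | prem hγ => exact hΓ _ hγ
  | a1 => exact fun _ => himp_eq_top_iff.2 inf_le_left
  | a2 => exact fun _ => himp_eq_top_iff.2 inf_le_right
  | a3 => exact fun _ => himp_eq_top_iff.2 (le_himp_iff.2 (himp_inf_distrib _ _ _).ge)
  | a4 => exact fun _ => himp_eq_top_iff.2 le_sup_left
  | a5 => exact fun _ => himp_eq_top_iff.2 le_sup_right
  | a6 => exact fun _ => himp_eq_top_iff.2 (le_himp_iff.2 (sup_himp_distrib _ _ _).ge)
  | a7 => exact fun _ => himp_eq_top_iff.2 bot_le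
  | a8 => exact fun _ => himp_eq_top_iff.2 le_himp
  | a9 =>
    refine fun _ => himp_eq_top_iff.2 (le_himp_iff.2 ?_)
    exact (himp_inf_distrib _ _ _).ge.trans (himp_le_himp_left himp_inf_le)
  | kc => exact fun _ => evalCHA_cIff_eq_top.2 (CondHeyting.cond_inf _ _ _)
  | nc =>
    intro σ
    rw [evalCHA_cIff_eq_top, evalCHA, evalCHA_cTop, CondHeyting.cond_top]
  | subst τ _ ih => exact fun σ => (evalCHA_psubst σ τ _).trans (ih _)
  | mp _ _ ihφψ ihφ =>
    intro σ
    exact top_le_iff.1 ((ihφ σ).ge.trans (himp_eq_top_iff.1 (ihφψ σ)))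
  | congL _ ih =>
    intro σ
    rw [evalCHA_cIff_eq_top, evalCHA, evalCHA, evalCHA_cIff_eq_top.1 (ih σ)]
  | congR _ ih =>
    intro σ
    rw [evalCHA_cIff_eq_top, evalCHA, evalCHA, evalCHA_cIff_eq_top.1 (ih σ)]

end AlgebraicSemantics

/-! ## The Lindenbaum algebra -/

theorem psubst_var (φ : CForm) : psubst .var φ = φ := by
  induction φ <;> simp_all only [psubst]

/-- The substitution `p₀ ↦ φ`, `p₁ ↦ ψ`, `p₂ ↦ χ`, which turns the axioms of `ICK` into schemes.
The value at the letters `pₙ` with `n > 2` is irrelevant. -/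
def substThree (φ ψ χ : CForm) : ℕ → CForm
  | 0 => φ
  | 1 => ψ
  | _ => χ

namespace ICK

variable {Γ : Set CForm} {φ ψ χ φ' ψ' : CForm}

theorem and_imp_left (φ ψ : CForm) : ICK Γ (.imp (.and φ ψ) φ) :=
  ICK.subst (substThree φ ψ φ) a1

theorem and_imp_right (φ ψ : CForm) : ICK Γ (.imp (.and φ ψ) ψ) :=
  ICK.subst (substThree φ ψ φ) a2

theorem imp_and (h₁ : ICK Γ (.imp φ ψ)) (h₂ : ICK Γ (.imp φ χ)) : ICK Γ (.imp φ (.and ψ χ)) :=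
  mp (mp (ICK.subst (substThree φ ψ χ) a3) h₁) h₂

theorem imp_or_left (φ ψ : CForm) : ICK Γ (.imp φ (.or φ ψ)) :=
  ICK.subst (substThree φ ψ φ) a4

theorem imp_or_right (φ ψ : CForm) : ICK Γ (.imp ψ (.or φ ψ)) :=
  ICK.subst (substThree φ ψ φ) a5

theorem or_imp (h₁ : ICK Γ (.imp φ χ)) (h₂ : ICK Γ (.imp ψ χ)) : ICK Γ (.imp (.or φ ψ) χ) :=
  mp (mp (ICK.subst (substThree φ ψ χ) a6) h₁) h₂

theorem bot_imp (φ : CForm) : ICK Γ (.imp .bot φ) :=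
  ICK.subst (substThree φ φ φ) a7

theorem imp_of_right (φ : CForm) (h : ICK Γ ψ) : ICK Γ (.imp φ ψ) :=
  mp (ICK.subst (substThree ψ φ φ) a8) h

theorem imp_mp (h₁ : ICK Γ (.imp φ (.imp ψ χ))) (h₂ : ICK Γ (.imp φ ψ)) : ICK Γ (.imp φ χ) :=
  mp (mp (ICK.subst (substThree φ ψ χ) a9) h₁) h₂

theorem imp_imp_self (φ ψ : CForm) : ICK Γ (.imp φ (.imp ψ φ)) :=
  ICK.subst (substThree φ ψ φ) a8

theorem imp_trans (h₁ : ICK Γ (.imp φ ψ)) (h₂ : ICK Γ (.imp ψ χ)) : ICK Γ (.imp φ χ) :=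
  imp_mp (imp_of_right φ h₂) h₁

theorem imp_refl (φ : CForm) : ICK Γ (.imp φ φ) :=
  imp_mp (imp_imp_self φ (.imp φ φ)) (imp_imp_self φ φ)

theorem imp_imp_and (φ ψ : CForm) : ICK Γ (.imp φ (.imp ψ (.and φ ψ))) :=
  have pairing : ICK Γ (.imp (.imp ψ φ) (.imp (.imp ψ ψ) (.imp ψ (.and φ ψ)))) :=
    ICK.subst (substThree ψ φ ψ) a3
  imp_mp (imp_trans (imp_imp_self φ ψ) pairing) (imp_of_right φ (imp_refl ψ))

theorem imp_imp_iff_and_imp : ICK Γ (.imp φ (.imp ψ χ)) ↔ ICK Γ (.imp (.and φ ψ) χ) where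
  mp h := imp_mp (imp_trans (and_imp_left φ ψ) h) (and_imp_right φ ψ)
  mpr h := imp_trans (imp_imp_and φ ψ) (mp (ICK.subst (substThree ψ (.and φ ψ) χ) a9)
    (imp_of_right ψ h))

theorem cIff_iff : ICK Γ (cIff φ ψ) ↔ ICK Γ (.imp φ ψ) ∧ ICK Γ (.imp ψ φ) where
  mp h := ⟨mp (and_imp_left _ _) h, mp (and_imp_right _ _) h⟩
  mpr h := mp (mp (imp_imp_and _ _) h.1) h.2

theorem and_imp_and (hφ : ICK Γ (.imp φ φ')) (hψ : ICK Γ (.imp ψ ψ')) :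
    ICK Γ (.imp (.and φ ψ) (.and φ' ψ')) :=
  imp_and (imp_trans (and_imp_left φ ψ) hφ) (imp_trans (and_imp_right φ ψ) hψ)

theorem or_imp_or (hφ : ICK Γ (.imp φ φ')) (hψ : ICK Γ (.imp ψ ψ')) :
    ICK Γ (.imp (.or φ ψ) (.or φ' ψ')) :=
  or_imp (imp_trans hφ (imp_or_left φ' ψ')) (imp_trans hψ (imp_or_right φ' ψ'))

theorem imp_imp_imp (hφ : ICK Γ (.imp φ' φ)) (hψ : ICK Γ (.imp ψ ψ')) :
    ICK Γ (.imp (.imp φ ψ) (.imp φ' ψ')) :=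
  imp_imp_iff_and_imp.2 <| imp_trans
    (imp_mp (and_imp_left _ _) (imp_trans (and_imp_right _ _) hφ)) hψ

theorem cIff_cond (hφ : ICK Γ (cIff φ φ')) (hψ : ICK Γ (cIff ψ ψ')) :
    ICK Γ (cIff (.cond φ ψ) (.cond φ' ψ')) :=
  have left := cIff_iff.1 (congL (χ := ψ) hφ)
  have right := cIff_iff.1 (congR (χ := φ') hψ)
  cIff_iff.2 ⟨imp_trans left.1 right.1, imp_trans right.2 left.2⟩

end ICK

/-- Provable equivalence of formulas in `ICK ⊕ Γ`. -/
def provEquiv (Γ : Set CForm) : Setoid CForm where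
  r φ ψ := ICK Γ (cIff φ ψ)
  iseqv :=
    { refl φ := ICK.cIff_iff.2 ⟨ICK.imp_refl φ, ICK.imp_refl φ⟩
      symm h := ICK.cIff_iff.2 (ICK.cIff_iff.1 h).symm
      trans h₁ h₂ :=
        have ⟨h₁, h₁'⟩ := ICK.cIff_iff.1 h₁
        have ⟨h₂, h₂'⟩ := ICK.cIff_iff.1 h₂
        ICK.cIff_iff.2 ⟨ICK.imp_trans h₁ h₂, ICK.imp_trans h₂' h₁'⟩ }

/-- The Lindenbaum algebra of `ICK ⊕ Γ`: formulas modulo provable equivalence, ordered by provable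
implication. -/
def Lindenbaum (Γ : Set CForm) : Type :=
  Quotient (provEquiv Γ)

namespace Lindenbaum

variable {Γ : Set CForm}

/-- The class of a formula in the Lindenbaum algebra. -/
def mk (Γ : Set CForm) (φ : CForm) : Lindenbaum Γ :=
  Quotient.mk (provEquiv Γ) φ

instance : PartialOrder (Lindenbaum Γ) where
  le := Quotient.lift₂ (fun φ ψ => ICK Γ (.imp φ ψ)) fun _ _ _ _ hφ hψ =>
    have ⟨hφ, hφ'⟩ := ICK.cIff_iff.1 hφ
    have ⟨hψ, hψ'⟩ := ICK.cIff_iff.1 hψ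
    propext ⟨fun h => ICK.imp_trans hφ' (ICK.imp_trans h hψ),
      fun h => ICK.imp_trans hφ (ICK.imp_trans h hψ')⟩
  le_refl := Quotient.ind ICK.imp_refl
  le_trans := by
    rintro ⟨φ⟩ ⟨ψ⟩ ⟨χ⟩
    exact ICK.imp_trans
  le_antisymm := by
    rintro ⟨φ⟩ ⟨ψ⟩ h₁ h₂
    exact Quotient.sound (ICK.cIff_iff.2 ⟨h₁, h₂⟩)

theorem mk_eq_mk {φ ψ : CForm} : mk Γ φ = mk Γ ψ ↔ ICK Γ (cIff φ ψ) :=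
  Quotient.eq

instance : Lattice (Lindenbaum Γ) where
  sup := Quotient.map₂ .or fun _ _ hφ _ _ hψ =>
    have ⟨hφ, hφ'⟩ := ICK.cIff_iff.1 hφ
    have ⟨hψ, hψ'⟩ := ICK.cIff_iff.1 hψ
    ICK.cIff_iff.2 ⟨ICK.or_imp_or hφ hψ, ICK.or_imp_or hφ' hψ'⟩
  le_sup_left := Quotient.ind₂ ICK.imp_or_left
  le_sup_right := Quotient.ind₂ ICK.imp_or_right
  sup_le := by
    rintro ⟨φ⟩ ⟨ψ⟩ ⟨χ⟩
    exact ICK.or_imp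
  inf := Quotient.map₂ .and fun _ _ hφ _ _ hψ =>
    have ⟨hφ, hφ'⟩ := ICK.cIff_iff.1 hφ
    have ⟨hψ, hψ'⟩ := ICK.cIff_iff.1 hψ
    ICK.cIff_iff.2 ⟨ICK.and_imp_and hφ hψ, ICK.and_imp_and hφ' hψ'⟩
  inf_le_left := Quotient.ind₂ ICK.and_imp_left
  inf_le_right := Quotient.ind₂ ICK.and_imp_right
  le_inf := by
    rintro ⟨φ⟩ ⟨ψ⟩ ⟨χ⟩
    exact ICK.imp_and

instance : BoundedOrder (Lindenbaum Γ) where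
  top := mk Γ cTop
  le_top := Quotient.ind fun φ => ICK.imp_of_right φ (ICK.imp_refl .bot)
  bot := mk Γ .bot
  bot_le := Quotient.ind ICK.bot_imp

instance : HImp (Lindenbaum Γ) where
  himp := Quotient.map₂ .imp fun _ _ hφ _ _ hψ =>
    have ⟨hφ, hφ'⟩ := ICK.cIff_iff.1 hφ
    have ⟨hψ, hψ'⟩ := ICK.cIff_iff.1 hψ
    ICK.cIff_iff.2 ⟨ICK.imp_imp_imp hφ' hψ, ICK.imp_imp_imp hφ hψ'⟩

instance : HeytingAlgebra (Lindenbaum Γ) where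
  le_himp_iff := by
    rintro ⟨φ⟩ ⟨ψ⟩ ⟨χ⟩
    exact ICK.imp_imp_iff_and_imp
  compl a := a ⇨ ⊥
  himp_bot _ := rfl

instance : CondHeyting (Lindenbaum Γ) where
  cond := Quotient.map₂ .cond fun _ _ hφ _ _ hψ => ICK.cIff_cond hφ hψ
  cond_inf := by
    rintro ⟨φ⟩ ⟨ψ⟩ ⟨χ⟩
    exact mk_eq_mk.2 (ICK.subst (substThree φ ψ χ) ICK.kc)
  cond_top := Quotient.ind fun φ => mk_eq_mk.2 (ICK.subst (substThree φ φ φ) ICK.nc)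

theorem mk_eq_top {φ : CForm} : mk Γ φ = ⊤ ↔ ICK Γ φ := by
  rw [← top_le_iff]
  exact ⟨fun h => ICK.mp h (ICK.imp_refl .bot), ICK.imp_of_right cTop⟩

theorem evalCHA_mk (τ : ℕ → CForm) (φ : CForm) :
    evalCHA (fun p => mk Γ (τ p)) φ = mk Γ (psubst τ φ) := by
  induction φ with
  | var | bot => rfl
  | and φ ψ ihφ ihψ | or φ ψ ihφ ihψ | imp φ ψ ihφ ihψ | cond φ ψ ihφ ihψ =>
    simp only [evalCHA, ihφ, ihψ]
    rfl

theorem chaSat_iff {φ : CForm} : chaSat (Lindenbaum Γ) φ ↔ ICK Γ φ := by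
  refine ⟨fun h => ?_, fun h σ => ?_⟩
  · rw [← mk_eq_top, ← psubst_var φ, ← evalCHA_mk]
    exact h _
  · obtain ⟨τ, rfl⟩ : ∃ τ : ℕ → CForm, (fun p => mk Γ (τ p)) = σ :=
      ⟨fun p => (σ p).out, funext fun p => (σ p).out_eq⟩
    rw [evalCHA_mk, mk_eq_top]
    exact h.subst τ

end Lindenbaum

/-! ## The algebra of clopen upsets of a conditional Esakia space -/

theorem GenFrame.val_evalCHA (G : GenFrame) (σ : ℕ → G.AUp) (φ : CForm) :
    (evalCHA σ φ).val = csat G.le G.R (fun p => (σ p).val) φ := by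
  induction φ with
  | var | bot => rfl
  | and φ ψ ihφ ihψ | or φ ψ ihφ ihψ | imp φ ψ ihφ ihψ | cond φ ψ ihφ ihψ =>
    simp only [csat, ← ihφ, ← ihψ]
    rfl

namespace CondEsakia

variable {S : CondEsakia} {a b : Set S.X}

theorem ClopUp.himp (ha : S.ClopUp a) (hb : S.ClopUp b) :
    S.ClopUp {x | ∀ y, S.le x y → y ∈ a → y ∈ b} := by
  let _ := S.top
  refine ⟨?_, fun x y hxy hx z hyz => hx z (S.le_trans hxy hyz)⟩
  have compl_eq : {x | ∀ y, S.le x y → y ∈ a → y ∈ b} = {x | ∃ y ∈ a \ b, S.le x y}ᶜ := by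
    ext x
    simp only [mem_ofPred_eq, mem_compl_iff, mem_sdiff]
    grind
  rw [compl_eq]
  exact (S.down_clopen _ (ha.1.diff hb.1)).compl

theorem ClopUp.box (ha : S.ClopUp a) (hb : S.ClopUp b) :
    S.ClopUp {x | ∀ y, S.R a x y → y ∈ b} :=
  ⟨S.box_clopen a b ha.1 ha.2 hb.1 hb.2, fun x y hxy hx z hyz =>
    hx z ((S.coh a ha.1 ha.2 x z).1 ⟨y, z, hxy, hyz, S.le_refl z⟩)⟩

variable (S)

/-- The general conditional frame underlying a conditional Esakia space, whose admissible upsets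
are the clopen ones. -/
def toGenFrame : GenFrame :=
  let _ := S.top
  { X := S.X
    le := S.le
    le_refl := S.le_refl
    le_trans := S.le_trans
    le_antisymm := S.le_antisymm
    A := {a | S.ClopUp a}
    upA := fun _ ha => ha.2
    univ_mem := ⟨isClopen_univ, fun _ _ _ _ => trivial⟩
    empty_mem := ⟨isClopen_empty, fun _ _ _ h => h⟩
    inter_mem := fun _ ha _ hb => ⟨ha.1.inter hb.1, fun _ _ h => And.imp (ha.2 h) (hb.2 h)⟩
    union_mem := fun _ ha _ hb => ⟨ha.1.union hb.1, fun _ _ h => Or.imp (ha.2 h) (hb.2 h)⟩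
    R := S.R
    himp_mem := fun _ ha _ hb => ha.himp hb
    cimp_mem := fun _ ha _ hb => ha.box hb
    coh := fun a ha x y z hxy hyz =>
      ⟨z, (S.coh a ha.1 ha.2 x z).1 ⟨y, z, hxy, hyz, S.le_refl z⟩, S.le_refl z⟩ }

theorem valid_iff_chaSat {φ : CForm} : S.valid φ ↔ chaSat S.toGenFrame.AUp φ := by
  refine ⟨fun h σ => Subtype.ext ?_, fun h V hV => ?_⟩
  · rw [GenFrame.val_evalCHA]
    exact eq_univ_of_forall (h _ fun p => (σ p).2)
  · have csat_eq : csat S.le S.R V φ = univ :=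
      (S.toGenFrame.val_evalCHA (fun p => ⟨V p, hV p⟩) φ).symm.trans (congrArg Subtype.val (h _))
    exact eq_univ_iff_forall.1 csat_eq

end CondEsakia

/-! ## Clopen sets in compact ordered spaces -/

section Compactness

variable {X A F : Type*} [TopologicalSpace X] [FunLike F A (Set X)]

theorem exists_mem_disjoint_of_isCompact [Min A] [Top A] [InfTopHomClass F A (Set X)] (f : F)
    (hf : ∀ a, IsClosed (f a)) {K : Set X} (hK : IsCompact K) {x : X}
    (hx : ∀ y ∈ K, ∃ a, x ∈ f a ∧ y ∉ f a) : ∃ a, x ∈ f a ∧ Disjoint K (f a) := by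
  refine hK.induction_on (p := fun s => ∃ a, x ∈ f a ∧ Disjoint s (f a)) ?_ ?_ ?_ ?_
  · exact ⟨⊤, by simp only [map_top, top_eq_univ, mem_univ], empty_disjoint _⟩
  · rintro s t hst ⟨a, hxa, hta⟩
    exact ⟨a, hxa, hta.mono_left hst⟩
  · rintro s t ⟨a, hxa, hsa⟩ ⟨b, hxb, htb⟩
    refine ⟨a ⊓ b, ?_, ?_⟩ <;> rw [map_inf]
    exacts [⟨hxa, hxb⟩, disjoint_union_left.2
      ⟨hsa.mono_right inter_subset_left, htb.mono_right inter_subset_right⟩]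
  · intro y hy
    obtain ⟨a, hxa, hya⟩ := hx y hy
    exact ⟨(f a)ᶜ, mem_nhdsWithin_of_mem_nhds ((hf a).isOpen_compl.mem_nhds hya), a, hxa,
      disjoint_compl_left⟩

theorem exists_eq_of_isCompact [Max A] [Bot A] [SupBotHomClass F A (Set X)] (f : F)
    (hf : ∀ a, IsOpen (f a)) {K : Set X} (hK : IsCompact K)
    (h : ∀ x ∈ K, ∃ a, x ∈ f a ∧ f a ⊆ K) : ∃ a, f a = K := by
  suffices ∃ a, K ⊆ f a ∧ f a ⊆ K from this.imp fun a ha => ha.2.antisymm ha.1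
  refine hK.induction_on (p := fun s => ∃ a, s ⊆ f a ∧ f a ⊆ K) ?_ ?_ ?_ ?_
  · exact ⟨⊥, empty_subset _, by simp only [map_bot, bot_eq_empty, empty_subset]⟩
  · rintro s t hst ⟨a, hta, haK⟩
    exact ⟨a, hst.trans hta, haK⟩
  · rintro s t ⟨a, hsa, haK⟩ ⟨b, htb, hbK⟩
    refine ⟨a ⊔ b, ?_, ?_⟩ <;> rw [map_sup]
    exacts [union_subset_union hsa htb, union_subset haK hbK]
  · intro x hx
    obtain ⟨a, hxa, haK⟩ := h x hx
    exact ⟨f a, mem_nhdsWithin_of_mem_nhds ((hf a).mem_nhds hxa), a, subset_rfl, haK⟩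

variable [CompactSpace X] [Preorder X]

theorem exists_eq_of_isClopen_of_isUpperSet [Lattice A] [BoundedOrder A]
    [BoundedLatticeHomClass F A (Set X)] (f : F) (hf : ∀ a, IsClopen (f a))
    (hsep : ∀ x y, ¬x ≤ y → ∃ a, x ∈ f a ∧ y ∉ f a) {U : Set X} (hU : IsClopen U)
    (hU' : IsUpperSet U) : ∃ a, f a = U := by
  refine exists_eq_of_isCompact f (fun a => (hf a).isOpen) hU.isClosed.isCompact fun x hx => ?_
  obtain ⟨a, hxa, ha⟩ := exists_mem_disjoint_of_isCompact f (fun a => (hf a).isClosed)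
    hU.compl.isClosed.isCompact fun y hy => hsep x y fun hxy => hy (hU' hxy hx)
  exact ⟨a, hxa, disjoint_compl_left_iff_subset.1 ha⟩

theorem isClopen_lowerClosure_of_isTopologicalBasis {ι : Type*} {b : ι → Set X}
    (hb : TopologicalSpace.IsTopologicalBasis (range b))
    (hclopen : ∀ i, IsClopen (lowerClosure (b i) : Set X)) {U : Set X} (hU : IsClopen U) :
    IsClopen (lowerClosure U : Set X) := by
  obtain ⟨s, hs, rfl⟩ := eq_finite_iUnion_of_isTopologicalBasis_of_isCompact_open b hb U
    hU.isClosed.isCompact hU.isOpen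
  simp only [lowerClosure_iUnion, LowerSet.coe_iSup]
  exact hs.isClopen_biUnion fun i _ => hclopen i

end Compactness

/-! ## The space of prime filters -/

/-- The prime filters of a lattice, the points of its Priestley dual, ordered by inclusion. -/
structure PrimeFilter (A : Type) [Lattice A] where
  carrier : Set A
  isPrimeFilter : IsPrimeFilter carrier

namespace PrimeFilter

section Lattice

variable {A : Type} [Lattice A] {x : PrimeFilter A} {a b : A}

instance : SetLike (PrimeFilter A) A where
  coe := carrier
  coe_injective := by
    rintro ⟨_⟩ ⟨_⟩ rfl
    rfl

instance : PartialOrder (PrimeFilter A) := .ofSetLike (PrimeFilter A) A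

theorem mem_of_le (hab : a ≤ b) (ha : a ∈ x) : b ∈ x :=
  x.isPrimeFilter.2.2.1 ha hab

theorem inf_mem_iff : a ⊓ b ∈ x ↔ a ∈ x ∧ b ∈ x where
  mp h := ⟨mem_of_le inf_le_left h, mem_of_le inf_le_right h⟩
  mpr h := x.isPrimeFilter.2.2.2.1 h.1 h.2

theorem sup_mem_iff : a ⊔ b ∈ x ↔ a ∈ x ∨ b ∈ x where
  mp h := x.isPrimeFilter.2.2.2.2 h
  mpr h := h.elim (mem_of_le le_sup_left) (mem_of_le le_sup_right)

theorem isPrimeFilter_compl {J : Ideal A} (hJ : J.IsPrime) : IsPrimeFilter (J : Set A)ᶜ := by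
  refine ⟨nonempty_compl.2 hJ.ne_univ, ?_, fun a b ha hab hb => ha (J.lower hab hb),
    fun a b ha hb hab => (hJ.mem_or_mem hab).elim ha hb, fun a b hab => ?_⟩
  · exact compl_ne_univ.2 J.nonempty
  · by_contra! h
    exact hab (J.sup_mem (not_not.1 h.1) (not_not.1 h.2))

theorem top_mem [OrderTop A] (x : PrimeFilter A) : ⊤ ∈ x :=
  x.isPrimeFilter.1.elim fun _ => mem_of_le le_top

theorem bot_notMem [OrderBot A] (x : PrimeFilter A) : ⊥ ∉ x := fun h =>
  x.isPrimeFilter.2.1 (eq_univ_of_forall fun _ => mem_of_le (x := x) bot_le h)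

variable [BoundedOrder A]

/-- The Stone map, which sends a lattice element to the set of prime filters containing it. -/
def stoneMap : BoundedLatticeHom A (Set (PrimeFilter A)) where
  toFun a := {x | a ∈ x}
  map_sup' _ _ := ext fun _ => sup_mem_iff
  map_inf' _ _ := ext fun _ => inf_mem_iff
  map_top' := eq_univ_of_forall top_mem
  map_bot' := eq_empty_of_forall_notMem bot_notMem

theorem mem_stoneMap : x ∈ stoneMap a ↔ a ∈ x :=
  Iff.rfl

theorem isUpperSet_stoneMap (a : A) : IsUpperSet (stoneMap a) :=
  fun _ _ hxy hx => hxy hx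

theorem exists_mem_stoneMap_of_not_le {x y : PrimeFilter A} (h : ¬x ≤ y) :
    ∃ a, x ∈ stoneMap a ∧ y ∉ stoneMap a :=
  SetLike.not_le_iff_exists.1 h

/-- The Priestley topology. -/
instance : TopologicalSpace (PrimeFilter A) :=
  .generateFrom (range fun p : A × A => stoneMap p.1 \ stoneMap p.2)

theorem isTopologicalBasis_stoneMap_sdiff : TopologicalSpace.IsTopologicalBasis
    (range fun p : A × A => stoneMap p.1 \ stoneMap p.2) where
  exists_subset_inter := by
    rintro _ ⟨⟨a, b⟩, rfl⟩ _ ⟨⟨c, d⟩, rfl⟩ x hx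
    refine ⟨_, ⟨(a ⊓ c, b ⊔ d), ?_⟩, hx, subset_rfl⟩
    ext y
    simp only [mem_inter_iff, mem_sdiff, mem_stoneMap, inf_mem_iff, sup_mem_iff]
    tauto
  sUnion_eq := by
    refine eq_univ_of_forall fun x => ⟨_, ⟨(⊤, ⊥), rfl⟩, ?_⟩
    exact ⟨x.top_mem, x.bot_notMem⟩
  eq_generateFrom := rfl

theorem isClopen_stoneMap (a : A) : IsClopen (stoneMap a) where
  left := by
    have h := isTopologicalBasis_stoneMap_sdiff.isOpen (mem_range_self (⊤, a))
    rwa [map_top, top_eq_univ, ← compl_eq_univ_sdiff, isOpen_compl_iff] at h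
  right := by
    have h := isTopologicalBasis_stoneMap_sdiff.isOpen (mem_range_self (a, ⊥))
    rwa [map_bot, bot_eq_empty, sdiff_empty] at h

/-- The limit of an ultrafilter `F` on the prime filter space. -/
def ultrafilterLim (F : Ultrafilter (PrimeFilter A)) : PrimeFilter A where
  carrier := {a | stoneMap a ∈ F}
  isPrimeFilter := by
    refine ⟨⟨⊤, ?_⟩, fun h => ?_, fun a b ha hab => ?_, fun a b ha hb => ?_, fun a b h => ?_⟩
    · rw [mem_ofPred_eq, map_top]
      exact Filter.univ_mem
    · have bot_mem : stoneMap ⊥ ∈ F := eq_univ_iff_forall.1 h ⊥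
      rw [map_bot] at bot_mem
      exact F.empty_notMem bot_mem
    · exact Filter.mem_of_superset ha (OrderHomClass.mono stoneMap hab)
    · rw [mem_ofPred_eq, map_inf]
      exact Filter.inter_mem ha hb
    · rw [mem_ofPred_eq, map_sup] at h
      exact Ultrafilter.union_mem_iff.1 h

instance : CompactSpace (PrimeFilter A) where
  isCompact_univ := isCompact_iff_ultrafilter_le_nhds.2 fun F _ => by
    refine ⟨ultrafilterLim F, mem_univ _, ?_⟩
    rw [isTopologicalBasis_stoneMap_sdiff.nhds_hasBasis.ge_iff]
    rintro _ ⟨⟨⟨a, b⟩, rfl⟩, ha, hb⟩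
    exact Filter.inter_mem ha (Ultrafilter.compl_mem_iff_notMem.2 hb)

theorem exists_stoneMap_eq {U : Set (PrimeFilter A)} (hU : IsClopen U) (hU' : IsUpperSet U) :
    ∃ a, stoneMap a = U :=
  exists_eq_of_isClopen_of_isUpperSet stoneMap isClopen_stoneMap
    (fun _ _ => exists_mem_stoneMap_of_not_le) hU hU'

end Lattice

section DistribLattice

variable {A : Type} [DistribLattice A] {b : A}

theorem exists_le_notMem {F : PFilter A} (hb : b ∉ F) :
    ∃ x : PrimeFilter A, (∀ a ∈ F, a ∈ x) ∧ b ∉ x := by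
  have disj : Disjoint (F : Set A) (Ideal.principal b) :=
    disjoint_left.2 fun a ha hab => hb (PFilter.mem_of_le hab ha)
  obtain ⟨J, hJ, hbJ, hFJ⟩ := DistribLattice.prime_ideal_of_disjoint_filter_ideal disj
  have hbJ : b ∈ J := hbJ le_rfl
  exact ⟨⟨_, isPrimeFilter_compl hJ⟩, fun a ha haJ => disjoint_left.1 hFJ ha haJ, fun h => h hbJ⟩

theorem exists_comap_le_notMem {B : Type} [Lattice B] [OrderTop B] [OrderTop A]
    (g : InfTopHom A B) {x : PrimeFilter B} (hb : g b ∉ x) :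
    ∃ y : PrimeFilter A, (∀ a, g a ∈ x → a ∈ y) ∧ b ∉ y := by
  have isPFilter : IsPFilter (g ⁻¹' x) := by
    refine .of_def ⟨⊤, ?_⟩ (fun a ha c hc => ⟨a ⊓ c, ?_, inf_le_left, inf_le_right⟩) ?_
    · rw [mem_preimage, map_top]
      exact x.top_mem
    · rw [mem_preimage, map_inf]
      exact inf_mem_iff.2 ⟨ha, hc⟩
    · exact fun hac => mem_of_le (OrderHomClass.mono g hac)
  exact exists_le_notMem (F := isPFilter.toPFilter) hb

variable [BoundedOrder A]

theorem stoneMap_subset_stoneMap {a b : A} : stoneMap a ⊆ stoneMap b ↔ a ≤ b := by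
  refine ⟨fun h => ?_, fun h => OrderHomClass.mono stoneMap h⟩
  by_contra hab
  obtain ⟨x, hax, hbx⟩ := exists_le_notMem (F := PFilter.principal a) hab
  exact hbx (h (hax a le_rfl))

theorem stoneMap_injective : Function.Injective (stoneMap (A := A)) := fun _ _ h =>
  le_antisymm (stoneMap_subset_stoneMap.1 h.subset) (stoneMap_subset_stoneMap.1 h.superset)

instance [Nontrivial A] : Nonempty (PrimeFilter A) := by
  obtain ⟨x, -, -⟩ := exists_le_notMem (F := PFilter.principal (⊤ : A)) (bot_ne_top ∘ top_le_iff.1)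
  exact ⟨x⟩

end DistribLattice

section HeytingAlgebra

variable {A : Type} [HeytingAlgebra A]

theorem stoneMap_himp (a b : A) :
    stoneMap (a ⇨ b) = {x | ∀ y, x ≤ y → y ∈ stoneMap a → y ∈ stoneMap b} := by
  ext x
  refine ⟨fun hx y hxy ha => mem_of_le himp_inf_le (inf_mem_iff.2 ⟨hxy hx, ha⟩), fun h => ?_⟩
  by_contra hx
  let himpHom : InfTopHom A A :=
    { toFun := (a ⇨ ·), map_inf' := himp_inf_distrib a, map_top' := himp_top }
  obtain ⟨y, hxy, hb⟩ := exists_comap_le_notMem himpHom hx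
  have himp_self_mem : a ⇨ a ∈ x := by
    rw [himp_self]
    exact x.top_mem
  exact hb (h y (fun c hc => hxy c (mem_of_le le_himp hc)) (hxy a himp_self_mem))

theorem isClopen_lowerClosure {U : Set (PrimeFilter A)} (hU : IsClopen U) :
    IsClopen (lowerClosure U : Set (PrimeFilter A)) := by
  refine isClopen_lowerClosure_of_isTopologicalBasis isTopologicalBasis_stoneMap_sdiff ?_ hU
  rintro ⟨a, b⟩
  have lowerClosure_eq : (lowerClosure (stoneMap a \ stoneMap b) : Set (PrimeFilter A)) =
      (stoneMap (a ⇨ b))ᶜ := by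
    ext x
    simp only [stoneMap_himp, SetLike.mem_coe, mem_lowerClosure, mem_sdiff, mem_compl_iff,
      mem_ofPred_eq]
    grind
  rw [lowerClosure_eq]
  exact (isClopen_stoneMap _).compl

end HeytingAlgebra

end PrimeFilter

/-! ## The dual of a conditional Heyting algebra -/

namespace CondHeyting

open PrimeFilter

variable {A : Type} [CondHeyting A]

/-- The relation `R_U` on prime filters: for `U = {x | a ∈ x}`, `x R_U y` iff `b ∈ y` for all `b`
with `a ⊳ b ∈ x`. It is total when `U` is not of this form. -/
def dualRel (U : Set (PrimeFilter A)) (x y : PrimeFilter A) : Prop :=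
  ∀ a b, stoneMap a = U → cond a b ∈ x → b ∈ y

theorem dualRel_stoneMap {a : A} {x y : PrimeFilter A} :
    dualRel (stoneMap a) x y ↔ ∀ b, cond a b ∈ x → b ∈ y where
  mp h b := h a b rfl
  mpr h a' b ha' := by
    obtain rfl := stoneMap_injective ha'
    exact h b

theorem stoneMap_cond (a b : A) :
    stoneMap (cond a b) = {x | ∀ y, dualRel (stoneMap a) x y → y ∈ stoneMap b} := by
  ext x
  refine ⟨fun hx y hxy => dualRel_stoneMap.1 hxy b hx, fun h => ?_⟩
  by_contra hx
  let condHom : InfTopHom A A :=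
    { toFun := cond a, map_inf' := cond_inf a, map_top' := cond_top a }
  obtain ⟨y, hxy, hb⟩ := exists_comap_le_notMem condHom hx
  exact hb (h y (dualRel_stoneMap.2 hxy))

theorem isClosed_dualRel (U : Set (PrimeFilter A)) (x : PrimeFilter A) :
    IsClosed {y | dualRel U x y} := by
  simp only [dualRel, ofPred_forall]
  exact isClosed_iInter fun a => isClosed_iInter fun b => isClosed_iInter fun _ =>
    isClosed_iInter fun _ => (isClopen_stoneMap b).isClosed

theorem dualRel_mono {U : Set (PrimeFilter A)} {x x' y y' : PrimeFilter A} (hx : x ≤ x')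
    (hy : y' ≤ y) (h : dualRel U x' y') : dualRel U x y :=
  fun a b ha hab => hy (h a b ha (hx hab))

variable (A) in
/-- The prime filter space of a nontrivial conditional Heyting algebra, as a conditional Esakia
space. -/
def dualSpace [Nontrivial A] : CondEsakia where
  X := PrimeFilter A
  ne := inferInstance
  le := (· ≤ ·)
  le_refl := le_refl
  le_trans _ _ _ := le_trans
  le_antisymm _ _ := le_antisymm
  top := inferInstance
  compact := inferInstance
  sep _ _ h :=
    have ⟨a, hx, hy⟩ := exists_mem_stoneMap_of_not_le h
    ⟨stoneMap a, isClopen_stoneMap a, isUpperSet_stoneMap a, hx, hy⟩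
  down_clopen _ := isClopen_lowerClosure
  R := dualRel
  box_clopen U V hU hU' hV hV' := by
    obtain ⟨a, rfl⟩ := exists_stoneMap_eq hU hU'
    obtain ⟨b, rfl⟩ := exists_stoneMap_eq hV hV'
    rw [← stoneMap_cond]
    exact isClopen_stoneMap _
  coh _ _ _ x y := ⟨fun ⟨_, _, hx, h, hy⟩ => dualRel_mono hx hy h,
    fun h => ⟨x, y, le_rfl, h, le_rfl⟩⟩
  im_closed U _ _ := isClosed_dualRel U

theorem csat_stoneMap (σ : ℕ → A) (φ : CForm) :
    csat (· ≤ ·) dualRel (fun p => stoneMap (σ p)) φ = stoneMap (evalCHA σ φ) := by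
  induction φ with
  | var => rfl
  | bot => exact (map_bot stoneMap).symm
  | and φ ψ ihφ ihψ => simp only [csat, evalCHA, ihφ, ihψ, map_inf, inf_eq_inter]
  | or φ ψ ihφ ihψ => simp only [csat, evalCHA, ihφ, ihψ, map_sup, sup_eq_union]
  | imp φ ψ ihφ ihψ => simp only [csat, evalCHA, ihφ, ihψ, stoneMap_himp]
  | cond φ ψ ihφ ihψ => simp only [csat, evalCHA, ihφ, ihψ, stoneMap_cond]

theorem dualSpace_valid_iff [Nontrivial A] {φ : CForm} : (dualSpace A).valid φ ↔ chaSat A φ := by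
  have stoneMap_eq_univ (a : A) : stoneMap a = univ ↔ a = ⊤ := by
    rw [← top_eq_univ, ← map_top (stoneMap (A := A)), stoneMap_injective.eq_iff]
  refine ⟨fun h σ => ?_, fun h V hV => ?_⟩
  · rw [← stoneMap_eq_univ, ← csat_stoneMap]
    exact eq_univ_of_forall
      (h _ fun p => ⟨isClopen_stoneMap (σ p), isUpperSet_stoneMap (σ p)⟩)
  · choose σ hσ using fun p => exists_stoneMap_eq (hV p).1 (hV p).2
    obtain rfl : (fun p => stoneMap (σ p)) = V := funext hσ
    refine eq_univ_iff_forall.1 ((csat_stoneMap σ φ).trans ?_)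
    rw [h, map_top]
    rfl

end CondHeyting

/-- `φ ∈ ICK ⊕ Γ` iff `φ` is valid on every conditional
Esakia space validating all formulas of `Γ`. -/
theorem esakia_completeness (Γ : Set CForm) (φ : CForm) :
    ICK Γ φ ↔ ∀ S : CondEsakia, (∀ γ ∈ Γ, S.valid γ) → S.valid φ := by
  refine ⟨fun h S hS => ?_, fun h => ?_⟩
  · simp only [S.valid_iff_chaSat] at hS ⊢
    exact h.chaSat hS
  · rw [← Lindenbaum.chaSat_iff]
    cases subsingleton_or_nontrivial (Lindenbaum Γ)
    · exact chaSat_of_subsingleton φ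
    · rw [← CondHeyting.dualSpace_valid_iff]
      exact h _ fun γ hγ => CondHeyting.dualSpace_valid_iff.2 (Lindenbaum.chaSat_iff.2 (.prem hγ))
end
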